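/- Let X₁ ⊆ ℝ^m and X₂ ⊆ ℝ^n, let x₁ ∈ X₁, x₂ ∈ X₂, and let h : X₁ → X₂ be a map that is Lipschitz with constant K and satisfies h(x₁) = x₂. Let S ⊆ ℝ^m and let dh : S → ℝ^n be a function such that for every v ∈ S there exist ε > 0 and a map γ : (0, ε) → ℝ^m with γ(t) ∈ X₁ for all t, (γ(t) − x₁)/t → v as t → 0⁺, and (h(γ(t)) − x₂)/t → dh(v) as t → 0⁺. Then dh is Lipschitz with constant K, i.e. ‖dh(v₁) − dh(v₂)‖ ≤ K‖v₁ − v₂‖ for all v₁, v₂ ∈ S. -/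

import Mathlib

open Filter Set

/-- If `h : X₁ → X₂` is `K`-Lipschitz with `h x₁ = x₂`, and `dh : S → ℝⁿ` is a
function such that every `v ∈ S` is realized by an arc `γ` in `X₁` with
`(γ(t) − x₁)/t → v` and `(h(γ(t)) − x₂)/t → dh(v)` as `t → 0⁺`, then `dh` is
`K`-Lipschitz on `S`. -/
theorem induced_map_lipschitz
    {m n : ℕ}
    (X₁ : Set (EuclideanSpace ℝ (Fin m))) (X₂ : Set (EuclideanSpace ℝ (Fin n)))
    (x₁ : EuclideanSpace ℝ (Fin m)) (x₂ : EuclideanSpace ℝ (Fin n))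
    (hx₁ : x₁ ∈ X₁) (hx₂ : x₂ ∈ X₂)
    (h : EuclideanSpace ℝ (Fin m) → EuclideanSpace ℝ (Fin n))
    (hmaps : ∀ x ∈ X₁, h x ∈ X₂)
    (K : ℝ)
    (hLip : ∀ x ∈ X₁, ∀ y ∈ X₁, ‖h x - h y‖ ≤ K * ‖x - y‖)
    (hhx₁ : h x₁ = x₂)
    (S : Set (EuclideanSpace ℝ (Fin m)))
    (dh : EuclideanSpace ℝ (Fin m) → EuclideanSpace ℝ (Fin n))
    (hdh : ∀ v ∈ S, ∃ ε : ℝ, 0 < ε ∧ ∃ γ : ℝ → EuclideanSpace ℝ (Fin m),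
      (∀ t ∈ Ioo (0 : ℝ) ε, γ t ∈ X₁) ∧
      Tendsto (fun t : ℝ => t⁻¹ • (γ t - x₁)) (nhdsWithin 0 (Ioo 0 ε)) (nhds v) ∧
      Tendsto (fun t : ℝ => t⁻¹ • (h (γ t) - x₂)) (nhdsWithin 0 (Ioo 0 ε)) (nhds (dh v))) :
    ∀ v₁ ∈ S, ∀ v₂ ∈ S, ‖dh v₁ - dh v₂‖ ≤ K * ‖v₁ - v₂‖ := by
  intro v₁ hv₁ v₂ hv₂
  obtain ⟨a, ha, γ, hγ, g1, g2⟩ := hdh v₁ hv₁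
  obtain ⟨b, hb, δ, hδ, d1, d2⟩ := hdh v₂ hv₂
  rw [nhdsWithin_Ioo_eq_nhdsGT ha] at g1 g2
  rw [nhdsWithin_Ioo_eq_nhdsGT hb] at d1 d2
  refine le_of_tendsto_of_tendsto (g2.sub d2).norm ((g1.sub d1).norm.const_mul K) ?_
  filter_upwards [Ioo_mem_nhdsGT ha, Ioo_mem_nhdsGT hb] with t hta htb
  have ht : 0 ≤ ‖t⁻¹‖ := norm_nonneg _
  have key := hLip _ (hγ t hta) _ (hδ t htb)
  rw [← smul_sub, ← smul_sub, norm_smul, norm_smul, sub_sub_sub_cancel_right,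
    sub_sub_sub_cancel_right]
  calc ‖t⁻¹‖ * ‖h (γ t) - h (δ t)‖ ≤ ‖t⁻¹‖ * (K * ‖γ t - δ t‖) :=
        mul_le_mul_of_nonneg_left key ht
    _ = K * (‖t⁻¹‖ * ‖γ t - δ t‖) := by ring
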